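/- Let p_1, q_1, …, p_k, q_k be real bivariate polynomials, each (d,C)-bounded, satisfying the formal polynomial identity p_1(x,y)q_1(x,y) + ⋯ + p_k(x,y)q_k(x,y) = 0. Let X, Y be n×n Hermitian complex matrices and ρ, A, B arbitrary n×n complex matrices. Then there exist a natural number t ≤ 4kd^6, real coefficients c_1, …, c_t with |c_i| ≤ C^2·2^{2d}, and complex numbers Z_1, …, Z_t, such that tr((p_1(X,Y|A)q_1(X,Y|B)† + ⋯ + p_k(X,Y|A)q_k(X,Y|B)†)·ρ) = ∑_{i=1}^{t} c_i Z_i, where every Z_i has one of the following three forms for some sequences S, T ∈ {0,1}^* with len(S) + len(T) ≤ 2d: (1) ±(1/((len(S)+len(T))!))·tr([(X,Y)_S, A]·[(X,Y)_T, B]†·[X,ρ]); (2) ±(1/((len(S)+len(T))!))·tr([(X,Y)_S, A]·[(X,Y)_T, B]†·[Y,ρ]); (3) ±(1/((len(S)+len(T))!))·tr(A·[(X,Y)_S, [[X,Y], [(X,Y)_T, B]]]†·ρ). -/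

import Mathlib

open scoped BigOperators Matrix

/-- The total degree of a monomial (exponent vector). -/
def monomialDeg {σ : Type*} (m : σ →₀ ℕ) : ℕ := m.sum fun _ e => e

/-- A multivariate real polynomial is `(d, C)`-bounded if it has (total) degree at most
`d` and every coefficient of a monomial of degree `d' ≤ d` has magnitude at most `C/d'!`. -/
def MvBounded {σ : Type*} (d : ℕ) (C : ℝ) (f : MvPolynomial σ ℝ) : Prop :=
  f.totalDegree ≤ d ∧
  ∀ m : σ →₀ ℕ, monomialDeg m ≤ d →
    |MvPolynomial.coeff m f| ≤ C / (Nat.factorial (monomialDeg m) : ℝ)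

/-- The commutator `[M, N] = MN - NM`. -/
noncomputable def matComm {n : ℕ} (M N : Matrix (Fin n) (Fin n) ℂ) : Matrix (Fin n) (Fin n) ℂ :=
  M * N - N * M

/-- The nested commutator `[A, B]_k`, with `[A, B]_0 = B` and
`[A, B]_{k+1} = [A, [A, B]_k]`. -/
noncomputable def nestedComm {n : ℕ} (A B : Matrix (Fin n) (Fin n) ℂ) : ℕ → Matrix (Fin n) (Fin n) ℂ
  | 0 => B
  | k + 1 => A * nestedComm A B k - nestedComm A B k * A

/-- The bivariate nested commutator `[(X,Y)_S, A]` for `S ∈ {0,1}^ℓ` (encoded as a list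
of booleans, `false` for `0` and `true` for `1`). -/
noncomputable def commSeq {n : ℕ} (X Y : Matrix (Fin n) (Fin n) ℂ) :
    List Bool → Matrix (Fin n) (Fin n) ℂ → Matrix (Fin n) (Fin n) ℂ
  | [], A => A
  | b :: S, A => matComm (if b then Y else X) (commSeq X Y S A)

/-- The matrix commutator polynomial `p(X, Y | A) = ∑_{i+j≤d} a_{ij} [X, [Y, A]_j]_i`
associated to a real bivariate polynomial `p(x,y) = ∑ a_{ij} x^i y^j`. -/
noncomputable def mvCommPoly {n : ℕ} (f : MvPolynomial (Fin 2) ℝ)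
    (X Y A : Matrix (Fin n) (Fin n) ℂ) : Matrix (Fin n) (Fin n) ℂ :=
  ∑ m ∈ f.support,
    ((MvPolynomial.coeff m f : ℝ) : ℂ) • nestedComm X (nestedComm Y A (m 1)) (m 0)


section helpers
variable {n : ℕ}

lemma commSeq_append (X Y : Matrix (Fin n) (Fin n) ℂ) (S T : List Bool)
    (A : Matrix (Fin n) (Fin n) ℂ) :
    commSeq X Y (S ++ T) A = commSeq X Y S (commSeq X Y T A) := by
  induction S with
  | nil => rfl
  | cons b S ih => simp only [List.cons_append, commSeq, ih]

lemma commSeq_sub (X Y : Matrix (Fin n) (Fin n) ℂ) (S : List Bool)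
    (A B : Matrix (Fin n) (Fin n) ℂ) :
    commSeq X Y S (A - B) = commSeq X Y S A - commSeq X Y S B := by
  induction S with
  | nil => rfl
  | cons b S ih => simp only [commSeq, ih, matComm]; noncomm_ring

lemma commSeq_replicate (X Y : Matrix (Fin n) (Fin n) ℂ) (b : Bool) (a : ℕ)
    (A : Matrix (Fin n) (Fin n) ℂ) :
    commSeq X Y (List.replicate a b) A = nestedComm (if b then Y else X) A a := by
  induction a with
  | zero => rfl
  | succ a ih => simp only [List.replicate_succ, commSeq, nestedComm, ih, matComm]

/-- canonical word `X^a Y^b` -/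
def canon (a b : ℕ) : List Bool := List.replicate a false ++ List.replicate b true

lemma canon_length (a b : ℕ) : (canon a b).length = a + b := by simp [canon]

lemma commSeq_canon (X Y : Matrix (Fin n) (Fin n) ℂ) (a b : ℕ)
    (A : Matrix (Fin n) (Fin n) ℂ) :
    commSeq X Y (canon a b) A = nestedComm X (nestedComm Y A b) a := by
  simp [canon, commSeq_append, commSeq_replicate]

/-- unnormalised error forms -/
def ErrForm (X Y A B ρ : Matrix (Fin n) (Fin n) ℂ) (S T : List Bool) (w : ℂ) : Prop :=
  w = Matrix.trace (commSeq X Y S A * (commSeq X Y T B)ᴴ * matComm X ρ) ∨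
  w = Matrix.trace (commSeq X Y S A * (commSeq X Y T B)ᴴ * matComm Y ρ) ∨
  w = Matrix.trace (A * (commSeq X Y S (matComm (matComm X Y) (commSeq X Y T B)))ᴴ * ρ)

/-- `z` is a sum of at most `N` signed error forms of length less than `D`. -/
def Err (X Y A B ρ : Matrix (Fin n) (Fin n) ℂ) (D N : ℕ) (z : ℂ) : Prop :=
  ∃ l : List ℂ, l.length ≤ N ∧ l.sum = z ∧ ∀ w ∈ l, ∃ (s v : ℂ) (S T : List Bool),
    (s = 1 ∨ s = -1) ∧ S.length + T.length + 1 ≤ D ∧ ErrForm X Y A B ρ S T v ∧ w = s * v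

lemma Err.zero (X Y A B ρ : Matrix (Fin n) (Fin n) ℂ) (D N : ℕ) : Err X Y A B ρ D N 0 :=
  ⟨[], by simp⟩

lemma Err.add {X Y A B ρ : Matrix (Fin n) (Fin n) ℂ} {D N M : ℕ} {z w : ℂ}
    (h : Err X Y A B ρ D N z) (h' : Err X Y A B ρ D M w) : Err X Y A B ρ D (N + M) (z + w) := by
  obtain ⟨l, h1, h2, h3⟩ := h
  obtain ⟨l', h1', h2', h3'⟩ := h'
  refine ⟨l ++ l', by simp; omega, by simp [h2, h2'], ?_⟩
  intro w hw
  rcases List.mem_append.1 hw with hw | hw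
  · exact h3 w hw
  · exact h3' w hw

lemma Err.neg_single {X Y A B ρ : Matrix (Fin n) (Fin n) ℂ} {D : ℕ} {S T : List Bool} {v : ℂ}
    (h : ErrForm X Y A B ρ S T v) (hD : S.length + T.length + 1 ≤ D) :
    Err X Y A B ρ D 1 (-v) :=
  ⟨[-v], by simp, by simp, by
    intro w hw
    simp only [List.mem_singleton] at hw
    exact ⟨-1, v, S, T, Or.inr rfl, hD, h, by simp [hw]⟩⟩

lemma trace_move (Z M N ρ : Matrix (Fin n) (Fin n) ℂ) (hZ : Z.IsHermitian) :
    Matrix.trace (matComm Z M * Nᴴ * ρ) =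
      Matrix.trace (M * (matComm Z N)ᴴ * ρ) + -Matrix.trace (M * Nᴴ * matComm Z ρ) := by
  have h : Matrix.trace (Z * (M * Nᴴ * ρ)) = Matrix.trace (M * Nᴴ * ρ * Z) :=
    Matrix.trace_mul_comm _ _
  have e1 : matComm Z M * Nᴴ * ρ = Z * (M * Nᴴ * ρ) - M * Z * Nᴴ * ρ := by
    simp only [matComm]; noncomm_ring
  have e2 : M * (matComm Z N)ᴴ * ρ = M * Nᴴ * Z * ρ - M * Z * Nᴴ * ρ := by
    simp only [matComm, Matrix.conjTranspose_sub, Matrix.conjTranspose_mul, hZ.eq]; noncomm_ring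
  have e3 : M * Nᴴ * matComm Z ρ = M * Nᴴ * Z * ρ - M * Nᴴ * ρ * Z := by
    simp only [matComm]; noncomm_ring
  rw [e1, e2, e3]
  simp only [Matrix.trace_sub, h]
  ring

lemma err_move (X Y A B ρ : Matrix (Fin n) (Fin n) ℂ) (hX : X.IsHermitian) (hY : Y.IsHermitian)
    (D : ℕ) (S : List Bool) : ∀ T : List Bool, S.length + T.length ≤ D →
    Err X Y A B ρ D S.length
      (Matrix.trace (commSeq X Y S A * (commSeq X Y T B)ᴴ * ρ) -
        Matrix.trace (A * (commSeq X Y (S.reverse ++ T) B)ᴴ * ρ)) := by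
  induction S with
  | nil => intro T _; simpa [commSeq] using Err.zero X Y A B ρ D 0
  | cons b S ih =>
    intro T hT
    simp only [List.length_cons] at hT
    have h := ih (b :: T) (by simp only [List.length_cons]; omega)
    have hb : (if b then Y else X).IsHermitian := by cases b <;> simpa
    have hE : ErrForm X Y A B ρ S T (Matrix.trace (commSeq X Y S A * (commSeq X Y T B)ᴴ *
        matComm (if b then Y else X) ρ)) := by
      cases b
      · left; simp
      · right; left; simp
    have h2 := h.add (Err.neg_single (D := D) hE (by omega))
    simp only [List.length_cons]
    convert h2 using 1
    simp only [commSeq]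
    rw [trace_move _ _ _ _ hb]
    simp only [List.reverse_cons, List.append_assoc, List.singleton_append]
    ring

lemma comm_swap (X Y N : Matrix (Fin n) (Fin n) ℂ) :
    matComm Y (matComm X N) = matComm X (matComm Y N) - matComm (matComm X Y) N := by
  simp only [matComm]; noncomm_ring

/-- functional for words on the `B` side -/
noncomputable def wordTr (X Y A B ρ : Matrix (Fin n) (Fin n) ℂ) (S : List Bool) : ℂ :=
  Matrix.trace (A * (commSeq X Y S B)ᴴ * ρ)

lemma err_swap (X Y A B ρ : Matrix (Fin n) (Fin n) ℂ) (D : ℕ) (U T : List Bool)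
    (h : U.length + T.length + 2 ≤ D) : Err X Y A B ρ D 1
      (wordTr X Y A B ρ (U ++ true :: false :: T) -
        wordTr X Y A B ρ (U ++ false :: true :: T)) := by
  have hE : ErrForm X Y A B ρ U T
    (Matrix.trace (A * (commSeq X Y U (matComm (matComm X Y) (commSeq X Y T B)))ᴴ * ρ)) :=
    Or.inr (Or.inr rfl)
  convert Err.neg_single (D := D) hE (by omega) using 1
  simp only [wordTr, commSeq_append, commSeq, if_true, Bool.false_eq_true, if_false]
  rw [comm_swap]
  simp only [commSeq_sub, Matrix.conjTranspose_sub, Matrix.mul_sub, Matrix.sub_mul, Matrix.trace_sub]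
  ring

lemma err_pass (X Y A B ρ : Matrix (Fin n) (Fin n) ℂ) (D : ℕ) (T : List Bool) (a : ℕ) :
    ∀ U : List Bool, U.length + a + T.length + 1 ≤ D → Err X Y A B ρ D a
      (wordTr X Y A B ρ (U ++ true :: (List.replicate a false ++ T)) -
        wordTr X Y A B ρ (U ++ (List.replicate a false ++ true :: T))) := by
  induction a with
  | zero => intro U _; simpa using Err.zero X Y A B ρ D 0
  | succ a ih =>
    intro U h
    have h1 := err_swap X Y A B ρ D U (List.replicate a false ++ T) (by simp; omega)
    have h2 := ih (U ++ [false]) (by simp; omega)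
    have h3 := h2.add h1
    convert h3 using 1
    simp [List.replicate_succ]

lemma err_passes (X Y A B ρ : Matrix (Fin n) (Fin n) ℂ) (D a : ℕ) (b : ℕ) :
    ∀ T : List Bool, b + a + T.length ≤ D → Err X Y A B ρ D (b * a)
      (wordTr X Y A B ρ (List.replicate b true ++ (List.replicate a false ++ T)) -
        wordTr X Y A B ρ (List.replicate a false ++ (List.replicate b true ++ T))) := by
  induction b with
  | zero => intro T _; simpa using Err.zero X Y A B ρ D 0
  | succ b ih =>
    intro T h
    have h1 := err_pass X Y A B ρ D T a (List.replicate b true) (by simp; omega)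
    have h2 := ih (true :: T) (by simp; omega)
    have h3 := h1.add h2
    convert h3 using 1
    · ring
    · simp [List.replicate_succ']

lemma err_pair (X Y A B ρ : Matrix (Fin n) (Fin n) ℂ) (hX : X.IsHermitian) (hY : Y.IsHermitian)
    (a b a' b' : ℕ) :
    Err X Y A B ρ (a + b + (a' + b')) (a + b + b * (a + a'))
      (Matrix.trace (commSeq X Y (canon a b) A * (commSeq X Y (canon a' b') B)ᴴ * ρ) -
        wordTr X Y A B ρ (canon (a + a') (b + b'))) := by
  have h1 := err_move X Y A B ρ hX hY (a + b + (a' + b')) (canon a b) (canon a' b')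
    (by simp [canon_length])
  have h2 := err_passes X Y A B ρ (a + b + (a' + b')) (a + a') b (List.replicate b' true)
    (by simp; omega)
  rw [canon_length] at h1
  convert h1.add h2 using 1
  simp only [wordTr, canon, List.reverse_append, List.reverse_replicate, List.replicate_add,
    List.append_assoc]
  ring

/-- normalised error terms -/
def GoodZ (X Y A B ρ : Matrix (Fin n) (Fin n) ℂ) (d : ℕ) (z : ℂ) : Prop :=
  ∃ (s : ℂ) (Sl Tl : List Bool), (s = 1 ∨ s = -1) ∧
          Sl.length + Tl.length ≤ 2 * d ∧
          (z = (s / (Nat.factorial (Sl.length + Tl.length) : ℂ)) *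
              Matrix.trace (commSeq X Y Sl A * (commSeq X Y Tl B)ᴴ * matComm X ρ) ∨
           z = (s / (Nat.factorial (Sl.length + Tl.length) : ℂ)) *
              Matrix.trace (commSeq X Y Sl A * (commSeq X Y Tl B)ᴴ * matComm Y ρ) ∨
           z = (s / (Nat.factorial (Sl.length + Tl.length) : ℂ)) *
              Matrix.trace
                (A * (commSeq X Y Sl (matComm (matComm X Y) (commSeq X Y Tl B)))ᴴ * ρ))

/-- `z` is representable with at most `N` terms whose coefficients are at most `R`. -/
def TRep (X Y A B ρ : Matrix (Fin n) (Fin n) ℂ) (d : ℕ) (R : ℝ) (N : ℕ) (z : ℂ) : Prop :=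
  ∃ l : List (ℝ × ℂ), l.length ≤ N ∧ (l.map fun p => ((p.1 : ℝ) : ℂ) * p.2).sum = z ∧
    ∀ p ∈ l, |p.1| ≤ R ∧ GoodZ X Y A B ρ d p.2

lemma TRep.zero (X Y A B ρ : Matrix (Fin n) (Fin n) ℂ) (d : ℕ) (R : ℝ) (N : ℕ) :
    TRep X Y A B ρ d R N 0 := ⟨[], by simp⟩

lemma TRep.add {X Y A B ρ : Matrix (Fin n) (Fin n) ℂ} {d : ℕ} {R : ℝ} {N M : ℕ} {z w : ℂ}
    (h : TRep X Y A B ρ d R N z) (h' : TRep X Y A B ρ d R M w) :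
    TRep X Y A B ρ d R (N + M) (z + w) := by
  obtain ⟨l, h1, h2, h3⟩ := h
  obtain ⟨l', h1', h2', h3'⟩ := h'
  refine ⟨l ++ l', by simp; omega, by simp [h2, h2'], ?_⟩
  intro w hw
  rcases List.mem_append.1 hw with hw | hw
  · exact h3 w hw
  · exact h3' w hw

lemma TRep.sum {X Y A B ρ : Matrix (Fin n) (Fin n) ℂ} {d : ℕ} {R : ℝ} {ι : Type*}
    (s : Finset ι) (N : ι → ℕ) (z : ι → ℂ)
    (h : ∀ i ∈ s, TRep X Y A B ρ d R (N i) (z i)) :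
    TRep X Y A B ρ d R (∑ i ∈ s, N i) (∑ i ∈ s, z i) := by
  classical
  induction s using Finset.induction_on with
  | empty => simpa using TRep.zero X Y A B ρ d R 0
  | insert i s hi ih =>
    rw [Finset.sum_insert hi, Finset.sum_insert hi]
    exact (h i (Finset.mem_insert_self _ _)).add
      (ih fun j hj => h j (Finset.mem_insert_of_mem hj))

lemma TRep.single {X Y A B ρ : Matrix (Fin n) (Fin n) ℂ} {d K : ℕ} (hK : 0 < K) {R : ℝ} {c : ℝ}
    {s v : ℂ} {S T : List Bool} (hs : s = 1 ∨ s = -1) (hl : S.length + T.length ≤ 2 * d)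
    (hv : ErrForm X Y A B ρ S T v)
    (hc : |c| * ((S.length + T.length).factorial : ℝ) ≤ K * R) :
    TRep X Y A B ρ d R K (c * (s * v)) := by
  have hK' : (0 : ℝ) < K := by exact_mod_cast hK
  have hf : (0 : ℝ) < ((S.length + T.length).factorial : ℝ) := by
    exact_mod_cast Nat.factorial_pos _
  refine ⟨List.replicate K (c * ((S.length + T.length).factorial : ℝ) / K,
    (s / ((S.length + T.length).factorial : ℂ)) * v), by simp, ?_, ?_⟩
  · have h1 : (K : ℂ) ≠ 0 := by exact_mod_cast hK.ne'
    have h2 : ((S.length + T.length).factorial : ℂ) ≠ 0 := by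
      exact_mod_cast (Nat.factorial_pos _).ne'
    simp only [List.map_replicate, List.sum_replicate, nsmul_eq_mul]
    push_cast
    field_simp
  · intro p hp
    rw [List.eq_of_mem_replicate hp]
    refine ⟨?_, s, S, T, hs, hl, ?_⟩
    · simp only [abs_div, abs_mul, Nat.abs_cast]
      rw [div_le_iff₀ hK']
      linarith
    · rcases hv with h | h | h <;> simp [h]

lemma TRep.of_err {X Y A B ρ : Matrix (Fin n) (Fin n) ℂ} {d K D N : ℕ} (hK : 0 < K) {R : ℝ} {c : ℝ}
    {z : ℂ} (h : Err X Y A B ρ D N z) (hD : D ≤ 2 * d)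
    (hc : |c| * ((D - 1).factorial : ℝ) ≤ K * R) :
    TRep X Y A B ρ d R (N * K) (c * z) := by
  obtain ⟨l, h1, h2, h3⟩ := h
  suffices H : TRep X Y A B ρ d R (l.length * K) (c * z) by
    obtain ⟨m, a1, a2⟩ := H
    exact ⟨m, a1.trans (Nat.mul_le_mul_right _ h1), a2⟩
  clear h1
  subst h2
  induction l with
  | nil => simpa using TRep.zero X Y A B ρ d R 0
  | cons w l ih =>
    have i1 := ih (fun w hw => h3 w (List.mem_cons_of_mem _ hw))
    obtain ⟨s, v, S, T, hs, hl, hv, rfl⟩ := h3 w List.mem_cons_self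
    have i2 : TRep X Y A B ρ d R K (c * (s * v)) := by
      refine TRep.single hK hs (by omega) hv (le_trans ?_ hc)
      refine mul_le_mul_of_nonneg_left ?_ (abs_nonneg _)
      exact_mod_cast Nat.factorial_le (by omega)
    convert i2.add i1 using 1
    · simp only [List.length_cons]; ring
    · simp only [List.sum_cons]; ring

/-- exponent vector of a pair -/
noncomputable def expo (p : ℕ × ℕ) : Fin 2 →₀ ℕ := Finsupp.single 0 p.1 + Finsupp.single 1 p.2

lemma expo_zero (p : ℕ × ℕ) : expo p 0 = p.1 := by simp [expo]
lemma expo_one (p : ℕ × ℕ) : expo p 1 = p.2 := by simp [expo]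

lemma expo_add (p q : ℕ × ℕ) : expo p + expo q = expo (p + q) := by
  ext i; fin_cases i <;> simp [expo]

lemma expo_inj : Function.Injective expo := by
  intro p q h
  ext
  · rw [← expo_zero, h, expo_zero]
  · rw [← expo_one, h, expo_one]

lemma expo_surj (m : Fin 2 →₀ ℕ) : expo (m 0, m 1) = m := by
  ext i; fin_cases i <;> simp [expo]

lemma monomialDeg_expo (p : ℕ × ℕ) : monomialDeg (expo p) = p.1 + p.2 := by
  simp [monomialDeg, Finsupp.sum_fintype, expo]

/-- exponents of total degree at most `d` -/
def box (d : ℕ) : Finset (ℕ × ℕ) :=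
  ((Finset.range (d + 1)) ×ˢ (Finset.range (d + 1))).filter fun p => p.1 + p.2 ≤ d

lemma mem_box {d : ℕ} {p : ℕ × ℕ} : p ∈ box d ↔ p.1 + p.2 ≤ d := by
  simp only [box, Finset.mem_filter, Finset.mem_product, Finset.mem_range]
  omega

lemma box_succ (d : ℕ) : box (d + 1) = box d ∪ Finset.HasAntidiagonal.antidiagonal (d + 1) := by
  ext p
  simp only [mem_box, Finset.mem_union, Finset.HasAntidiagonal.mem_antidiagonal]
  omega

lemma box_card (d : ℕ) : 2 * (box d).card = (d + 1) * (d + 2) := by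
  induction d with
  | zero => decide
  | succ d ih =>
    rw [box_succ, Finset.card_union_of_disjoint, mul_add, ih, Finset.Nat.card_antidiagonal]
    · ring
    · rw [Finset.disjoint_left]
      intro p
      simp only [mem_box, Finset.HasAntidiagonal.mem_antidiagonal]
      omega

lemma sum_support_eq {M : Type*} [AddCommMonoid M] {d : ℕ} {f : MvPolynomial (Fin 2) ℝ}
    (hf : f.totalDegree ≤ d) (g : (Fin 2 →₀ ℕ) → M) (hg : ∀ m, f.coeff m = 0 → g m = 0) :
    ∑ m ∈ f.support, g m = ∑ p ∈ box d, g (expo p) := by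
  have h := Finset.sum_map (box d) ⟨expo, expo_inj⟩ g
  simp only [Function.Embedding.coeFn_mk] at h
  rw [← h]
  apply Finset.sum_subset
  · intro m hm
    rw [Finset.mem_map]
    refine ⟨(m 0, m 1), ?_, expo_surj m⟩
    rw [mem_box]
    have := (MvPolynomial.le_totalDegree hm).trans hf
    simpa [Finsupp.sum_fintype] using this
  · intro m _ hm
    exact hg m (MvPolynomial.notMem_support_iff.1 hm)


lemma mvCommPoly_eq {d : ℕ} {f : MvPolynomial (Fin 2) ℝ} (hf : f.totalDegree ≤ d)
    (X Y A : Matrix (Fin n) (Fin n) ℂ) :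
    mvCommPoly f X Y A =
      ∑ p ∈ box d, ((f.coeff (expo p) : ℝ) : ℂ) • commSeq X Y (canon p.1 p.2) A := by
  rw [mvCommPoly, sum_support_eq hf]
  · simp only [commSeq_canon, expo_zero, expo_one]
  · intro m hm; simp [hm]

lemma poly_eq {d : ℕ} {f : MvPolynomial (Fin 2) ℝ} (hf : f.totalDegree ≤ d) :
    f = ∑ p ∈ box d, MvPolynomial.monomial (expo p) (f.coeff (expo p)) := by
  conv_lhs => rw [f.as_sum]
  rw [sum_support_eq hf]
  intro m hm; simp [hm]

lemma sum_canon_zero {k d : ℕ} (P Q : Fin k → MvPolynomial (Fin 2) ℝ)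
    (hP : ∀ i, (P i).totalDegree ≤ d) (hQ : ∀ i, (Q i).totalDegree ≤ d)
    (hid : ∑ i, P i * Q i = 0) (U : ℕ → ℕ → ℂ) :
    ∑ p ∈ box d, ∑ q ∈ box d,
      ((∑ i, (P i).coeff (expo p) * (Q i).coeff (expo q) : ℝ) : ℂ) *
        U (p.1 + q.1) (p.2 + q.2) = 0 := by
  let L : MvPolynomial (Fin 2) ℝ →ₗ[ℝ] ℂ :=
    (MvPolynomial.basisMonomials (Fin 2) ℝ).constr ℝ fun m => U (m 0) (m 1)
  have hL : ∀ m r, L (MvPolynomial.monomial m r) = (r : ℂ) * U (m 0) (m 1) := by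
    intro m r
    have h1 : MvPolynomial.monomial m r = r • MvPolynomial.basisMonomials (Fin 2) ℝ m := by
      simp [MvPolynomial.smul_monomial]
    rw [h1, map_smul, Module.Basis.constr_basis]
    simp
  have h0 : L (∑ i, P i * Q i) = 0 := by rw [hid, map_zero]
  rw [map_sum] at h0
  rw [← h0]
  have h2 : ∀ i, L (P i * Q i) = ∑ p ∈ box d, ∑ q ∈ box d,
      (((P i).coeff (expo p) * (Q i).coeff (expo q) : ℝ) : ℂ) * U (p.1 + q.1) (p.2 + q.2) := by
    intro i
    conv_lhs => rw [poly_eq (hP i), poly_eq (hQ i), Finset.sum_mul_sum]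
    simp only [map_sum, MvPolynomial.monomial_mul, hL, expo_add, expo_zero, expo_one,
      Prod.fst_add, Prod.snd_add]
  simp only [h2]
  symm
  rw [Finset.sum_comm]
  refine Finset.sum_congr rfl fun p _ => ?_
  rw [Finset.sum_comm]
  refine Finset.sum_congr rfl fun q _ => ?_
  push_cast
  rw [Finset.sum_mul]

lemma trace_expand {k d : ℕ} (P Q : Fin k → MvPolynomial (Fin 2) ℝ)
    (hP : ∀ i, (P i).totalDegree ≤ d) (hQ : ∀ i, (Q i).totalDegree ≤ d)
    (hid : ∑ i, P i * Q i = 0) (X Y A B ρ : Matrix (Fin n) (Fin n) ℂ) :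
    Matrix.trace ((∑ i, mvCommPoly (P i) X Y A * (mvCommPoly (Q i) X Y B)ᴴ) * ρ) =
    ∑ p ∈ box d, ∑ q ∈ box d,
      ((∑ i, (P i).coeff (expo p) * (Q i).coeff (expo q) : ℝ) : ℂ) *
        (Matrix.trace (commSeq X Y (canon p.1 p.2) A * (commSeq X Y (canon q.1 q.2) B)ᴴ * ρ) -
          wordTr X Y A B ρ (canon (p.1 + q.1) (p.2 + q.2))) := by
  have hz := sum_canon_zero P Q hP hQ hid fun a b => wordTr X Y A B ρ (canon a b)
  simp only [mul_sub, Finset.sum_sub_distrib]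
  rw [hz, sub_zero, Finset.sum_mul, Matrix.trace_sum]
  have h2 : ∀ i, Matrix.trace (mvCommPoly (P i) X Y A * (mvCommPoly (Q i) X Y B)ᴴ * ρ) =
      ∑ p ∈ box d, ∑ q ∈ box d,
      (((P i).coeff (expo p) * (Q i).coeff (expo q) : ℝ) : ℂ) *
      Matrix.trace (commSeq X Y (canon p.1 p.2) A * (commSeq X Y (canon q.1 q.2) B)ᴴ * ρ) := by
    intro i
    rw [mvCommPoly_eq (hP i), mvCommPoly_eq (hQ i), Matrix.conjTranspose_sum, Finset.sum_mul_sum]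
    simp only [Finset.sum_mul, Matrix.trace_sum]
    refine Finset.sum_congr rfl fun p _ => Finset.sum_congr rfl fun q _ => ?_
    simp [Matrix.conjTranspose_smul, Matrix.trace_smul, mul_assoc, mul_left_comm]
  simp only [h2]
  rw [Finset.sum_comm]
  refine Finset.sum_congr rfl fun p _ => ?_
  rw [Finset.sum_comm]
  refine Finset.sum_congr rfl fun q _ => ?_
  push_cast
  rw [Finset.sum_mul]

lemma core {k d : ℕ} {C R : ℝ} (P Q : Fin k → MvPolynomial (Fin 2) ℝ)
    (hP : ∀ i, MvBounded d C (P i)) (hQ : ∀ i, MvBounded d C (Q i))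
    (hid : ∑ i, P i * Q i = 0) (X Y A B ρ : Matrix (Fin n) (Fin n) ℂ)
    (hX : X.IsHermitian) (hY : Y.IsHermitian) (K : ℕ) (hK : 0 < K)
    (hb : ∀ e f : ℕ, e ≤ d → f ≤ d →
      k * (C / (e.factorial : ℝ) * (C / (f.factorial : ℝ))) * ((e + f - 1).factorial : ℝ) ≤ K * R) :
    TRep X Y A B ρ d R
      (∑ p ∈ box d, ∑ q ∈ box d, (p.1 + p.2 + p.2 * (p.1 + q.1)) * K)
      (Matrix.trace ((∑ i, mvCommPoly (P i) X Y A * (mvCommPoly (Q i) X Y B)ᴴ) * ρ)) := by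
  rw [trace_expand P Q (fun i => (hP i).1) (fun i => (hQ i).1) hid]
  refine TRep.sum _ _ _ fun p hp => TRep.sum _ _ _ fun q hq => ?_
  rw [mem_box] at hp hq
  refine TRep.of_err hK (err_pair X Y A B ρ hX hY _ _ _ _) (by omega) (le_trans ?_ (hb _ _ hp hq))
  refine mul_le_mul_of_nonneg_right ?_ (Nat.cast_nonneg _)
  refine (Finset.abs_sum_le_sum_abs _ _).trans ?_
  refine (Finset.sum_le_card_nsmul _ _
    (C / ((p.1 + p.2).factorial : ℝ) * (C / ((q.1 + q.2).factorial : ℝ))) fun i _ => ?_).trans ?_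
  · rw [abs_mul]
    have h1 := (hP i).2 (expo p) (by rwa [monomialDeg_expo])
    have h2 := (hQ i).2 (expo q) (by rwa [monomialDeg_expo])
    rw [monomialDeg_expo] at h1 h2
    exact mul_le_mul h1 h2 (abs_nonneg _) ((abs_nonneg _).trans h1)
  · simp

lemma coef_bound (d k : ℕ) (C : ℝ) (e f : ℕ) (he : e ≤ d) (hf : f ≤ d) :
    k * (C / (e.factorial : ℝ) * (C / (f.factorial : ℝ))) * ((e + f - 1).factorial : ℝ) ≤
      k * (C ^ 2 * 2 ^ (2 * d)) := by
  have h1 : (e + f - 1).factorial ≤ 2 ^ (2 * d) * (e.factorial * f.factorial) := by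
    calc (e + f - 1).factorial ≤ (e + f).factorial := Nat.factorial_le (by omega)
      _ = (e + f).choose f * (e.factorial * f.factorial) := by
          rw [← Nat.add_choose_mul_factorial_mul_factorial e f]; ring
      _ ≤ 2 ^ (2 * d) * (e.factorial * f.factorial) := by
          refine Nat.mul_le_mul_right _ ((Nat.choose_le_two_pow _ _).trans ?_)
          exact Nat.pow_le_pow_right (by norm_num) (by omega)
  have h2 : ((e + f - 1).factorial : ℝ) ≤ 2 ^ (2 * d) * (e.factorial * f.factorial) := by
    exact_mod_cast h1
  have he' : (0 : ℝ) < e.factorial := by exact_mod_cast Nat.factorial_pos _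
  have hf' : (0 : ℝ) < f.factorial := by exact_mod_cast Nat.factorial_pos _
  rw [mul_assoc]
  refine mul_le_mul_of_nonneg_left ?_ (Nat.cast_nonneg _)
  have e1 : C / (e.factorial : ℝ) * (C / (f.factorial : ℝ)) * ((e + f - 1).factorial : ℝ) =
    C ^ 2 * (((e + f - 1).factorial : ℝ) / (e.factorial * f.factorial)) := by
    field_simp
  rw [e1]
  refine mul_le_mul_of_nonneg_left ?_ (sq_nonneg _)
  rw [div_le_iff₀ (by positivity)]
  exact h2

lemma count_bound (d k : ℕ) (hd : 2 ≤ d) :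
    ∑ p ∈ box d, ∑ q ∈ box d, (p.1 + p.2 + p.2 * (p.1 + q.1)) * k ≤ 4 * k * d ^ 6 := by
  have h1 : ∀ p ∈ box d, ∀ q ∈ box d,
      (p.1 + p.2 + p.2 * (p.1 + q.1)) * k ≤ (d + d * d) * k := by
    intro p hp q hq
    rw [mem_box] at hp hq
    refine Nat.mul_le_mul_right _ (Nat.add_le_add hp ?_)
    obtain ⟨u, rfl⟩ := Nat.exists_eq_add_of_le hp
    have : q.1 ≤ p.1 + p.2 + u := by omega
    nlinarith [Nat.mul_le_mul_left p.2 this]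
  have h2 : ∑ p ∈ box d, ∑ q ∈ box d, (p.1 + p.2 + p.2 * (p.1 + q.1)) * k ≤
      (box d).card * ((box d).card * ((d + d * d) * k)) := by
    rw [← smul_eq_mul]
    refine Finset.sum_le_card_nsmul _ _ _ fun p hp => ?_
    rw [← smul_eq_mul]
    exact Finset.sum_le_card_nsmul _ _ _ fun q hq => h1 p hp q hq
  refine h2.trans ?_
  have hc := box_card d
  have h3 : 2 * (d + 1) ≤ 3 * d := by omega
  have h4 : d + 2 ≤ 2 * d := by omega
  have h5 : (box d).card * 2 ≤ 3 * d * d := by nlinarith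
  have h6 : 2 * (d + d * d) ≤ 3 * d * d := by nlinarith
  have h7 : ((box d).card * 2) * (((box d).card * 2) * (2 * (d + d * d))) ≤
      (3 * d * d) * ((3 * d * d) * (3 * d * d)) := by gcongr
  have h8 : (box d).card * ((box d).card * (d + d * d)) ≤ 4 * d ^ 6 := by nlinarith
  nlinarith [Nat.mul_le_mul_right k h8]

end helpers

/-- **Polynomial identities to nested commutator identities** (Theorem 3.9). Given
`(d, C)`-bounded real bivariate polynomials `p₁, q₁, …, p_k, q_k` with
`∑ pᵢ qᵢ = 0` as polynomials, and Hermitian `X, Y` with arbitrary `ρ, A, B`, the trace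
`tr((∑ᵢ pᵢ(X,Y|A) qᵢ(X,Y|B)†) ρ)` equals `∑_{i=1}^t cᵢ Zᵢ` with `t ≤ 4kd⁶`, real
coefficients `|cᵢ| ≤ C² 2^{2d}`, and each `Zᵢ` of one of the three stated error forms. -/
theorem polynomial_identity_to_commutators (n k d : ℕ) (C : ℝ)
    (P Q : Fin k → MvPolynomial (Fin 2) ℝ)
    (hP : ∀ i, MvBounded d C (P i)) (hQ : ∀ i, MvBounded d C (Q i))
    (hid : ∑ i, P i * Q i = 0)
    (X Y A B ρ : Matrix (Fin n) (Fin n) ℂ)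
    (hX : X.IsHermitian) (hY : Y.IsHermitian) :
    ∃ t : ℕ, t ≤ 4 * k * d ^ 6 ∧
      ∃ (c : Fin t → ℝ) (Z : Fin t → ℂ),
        (∀ i, |c i| ≤ C ^ 2 * 2 ^ (2 * d)) ∧
        (Matrix.trace ((∑ i, mvCommPoly (P i) X Y A * (mvCommPoly (Q i) X Y B)ᴴ) * ρ)
          = ∑ i, ((c i : ℝ) : ℂ) * Z i) ∧
        (∀ i : Fin t, ∃ (s : ℂ) (Sl Tl : List Bool), (s = 1 ∨ s = -1) ∧
          Sl.length + Tl.length ≤ 2 * d ∧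
          (Z i = (s / (Nat.factorial (Sl.length + Tl.length) : ℂ)) *
              Matrix.trace (commSeq X Y Sl A * (commSeq X Y Tl B)ᴴ * matComm X ρ) ∨
           Z i = (s / (Nat.factorial (Sl.length + Tl.length) : ℂ)) *
              Matrix.trace (commSeq X Y Sl A * (commSeq X Y Tl B)ᴴ * matComm Y ρ) ∨
           Z i = (s / (Nat.factorial (Sl.length + Tl.length) : ℂ)) *
              Matrix.trace
                (A * (commSeq X Y Sl (matComm (matComm X Y) (commSeq X Y Tl B)))ᴴ * ρ))) := by
  suffices H : TRep X Y A B ρ d (C ^ 2 * 2 ^ (2 * d)) (4 * k * d ^ 6)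
      (Matrix.trace ((∑ i, mvCommPoly (P i) X Y A * (mvCommPoly (Q i) X Y B)ᴴ) * ρ)) by
    obtain ⟨l, h1, h2, h3⟩ := H
    refine ⟨l.length, h1, fun i => (l.get i).1, fun i => (l.get i).2,
      fun i => (h3 _ (l.get_mem i)).1, ?_, fun i => (h3 _ (l.get_mem i)).2⟩
    rw [← h2, ← Fin.sum_univ_getElem]
    rw [← Equiv.sum_comp (finCongr (by simp : l.length = (l.map fun p => (p.1 : ℂ) * p.2).length))]
    simp
  have mono : ∀ {N M : ℕ} {z : ℂ}, TRep X Y A B ρ d (C ^ 2 * 2 ^ (2 * d)) N z → N ≤ M →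
      TRep X Y A B ρ d (C ^ 2 * 2 ^ (2 * d)) M z :=
    fun ⟨l, h1, h2⟩ h => ⟨l, h1.trans h, h2⟩
  rcases Nat.eq_zero_or_pos k with rfl | hk
  · simpa using TRep.zero X Y A B ρ d (C ^ 2 * 2 ^ (2 * d)) 0
  rcases Nat.lt_or_ge d 2 with hd | hd
  · rcases Nat.eq_zero_or_pos d with rfl | hd0
    · refine mono (core P Q hP hQ hid X Y A B ρ hX hY k hk (coef_bound _ _ _)) ?_
      have : box 0 = {(0, 0)} := by decide
      simp [this]
    · obtain rfl : d = 1 := by omega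
      rcases Nat.lt_or_ge k 2 with hk2 | hk2
      · obtain rfl : k = 1 := by omega
        simp only [Finset.univ_unique, Finset.sum_singleton, Fin.default_eq_zero, mul_eq_zero] at hid
        have : Matrix.trace ((∑ i, mvCommPoly (P i) X Y A * (mvCommPoly (Q i) X Y B)ᴴ) * ρ) = 0 := by
          rcases hid with h | h <;> simp [h, mvCommPoly]
        rw [this]
        exact TRep.zero _ _ _ _ _ _ _ _
      · refine mono (core P Q hP hQ hid X Y A B ρ hX hY ((k + 3) / 4) (by omega) ?_) ?_
        · intro e f he hf
          have hq : k ≤ (k + 3) / 4 * 4 := by omega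
          have hq' : (k : ℝ) ≤ (((k + 3) / 4 : ℕ) : ℝ) * 4 := by exact_mod_cast hq
          have hh : (k : ℝ) * C ^ 2 ≤ (((k + 3) / 4 : ℕ) : ℝ) * 4 * C ^ 2 :=
            mul_le_mul_of_nonneg_right hq' (sq_nonneg C)
          interval_cases e <;> interval_cases f <;> norm_num [Nat.factorial] <;> nlinarith
        · have : box 1 = {(0, 0), (0, 1), (1, 0)} := by decide
          simp only [this]
          simp
          omega
  · exact mono (core P Q hP hQ hid X Y A B ρ hX hY k hk (coef_bound _ _ _)) (count_bound d k hd)
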